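/- arXiv:1608.04218 — 2 statements merged into one kernel-verified Lean document; each statement's English description precedes it below -/
import Mathlib

section
/- Let H be a complex Hilbert space with dim H > k (possibly infinite-dimensional), k ≥ 1 a natural number, and A a bounded linear operator on H. Then W_{𝒫_k}(A) = W(A), i.e., λ ∈ ℂ is an eigenvalue of the compression A_P for some orthogonal projection P with k-dimensional range if and only if λ = ⟨Af, f⟩ for some f ∈ H with ‖f‖ = 1. -/
open scoped InnerProductSpace

/-- A nonzero vector belongs to a linearly independent family of any positive finite length not
exceeding the dimension of the space. -/
theorem exists_linearIndependent_fin_mem_range {K V : Type*} [Field K] [AddCommGroup V]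
    [Module K V] {x : V} (hx : x ≠ 0) {n : ℕ} (hn : 1 ≤ n)
    (hrank : (n : Cardinal) ≤ Module.rank K V) :
    ∃ v : Fin n → V, LinearIndependent K v ∧ x ∈ Set.range v := by
  induction n, hn using Nat.le_induction with
  | base => exact ⟨![x], .of_subsingleton 0 hx, 0, rfl⟩
  | succ n _ ih =>
    have hlt : (n : Cardinal) < Module.rank K V :=
      lt_of_lt_of_le (by exact_mod_cast n.lt_succ_self) hrank
    obtain ⟨v, hv, i, hi⟩ := ih hlt.le
    obtain ⟨y, hy⟩ := exists_linearIndependent_cons_of_lt_rank hv hlt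
    exact ⟨Fin.cons y v, hy, i.succ, by simpa using hi⟩

/-- Between the line through a nonzero vector of a subspace `W` and `W` itself there are subspaces
of every positive finite dimension not exceeding that of `W`. -/
theorem Submodule.exists_le_mem_rank_eq {K V : Type*} [Field K] [AddCommGroup V]
    [Module K V] (W : Submodule K V) {x : V} (hxW : x ∈ W) (hx : x ≠ 0) {n : ℕ} (hn : 1 ≤ n)
    (hrank : (n : Cardinal) ≤ Module.rank K W) :
    ∃ U ≤ W, x ∈ U ∧ Module.rank K U = n := by
  obtain ⟨v, hv, i, hi⟩ := exists_linearIndependent_fin_mem_range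
    (x := (⟨x, hxW⟩ : W)) (by simpa [Subtype.ext_iff] using hx) hn hrank
  have hv' : LinearIndependent K (fun j ↦ (v j : V)) := hv.map' W.subtype W.ker_subtype
  refine ⟨span K (Set.range fun j ↦ (v j : V)), span_le.2 ?_, subset_span ⟨i, ?_⟩, ?_⟩
  · rintro _ ⟨j, rfl⟩
    exact (v j).2
  · simp [hi]
  · rw [rank_span hv']
    simpa using Cardinal.mk_range_eq_of_injective hv'.injective

/-- The kernel of a linear functional has codimension at most one. -/
theorem LinearMap.natCast_le_rank_ker_of_lt_rank {K V : Type*} [Field K] [AddCommGroup V]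
    [Module K V] (φ : V →ₗ[K] K) {n : ℕ} (hrank : (n : Cardinal) < Module.rank K V) :
    (n : Cardinal) ≤ Module.rank K (LinearMap.ker φ) := by
  by_contra! hlt
  obtain ⟨m, hm⟩ := Cardinal.lt_aleph0.1 (hlt.trans Cardinal.natCast_lt_aleph0)
  have hrange : Module.rank K (LinearMap.range φ) ≤ 1 := by
    simpa using Submodule.rank_le (LinearMap.range φ)
  have hsum := LinearMap.lift_rank_range_add_rank_ker φ
  rw [hm] at hsum hlt
  have hle : Cardinal.lift (Module.rank K V) ≤ ((m + 1 : ℕ) : Cardinal) := by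
    rw [← hsum, add_comm]
    push_cast
    rw [Cardinal.lift_natCast]
    gcongr
    simpa using hrange
  have hmn : m < n := by exact_mod_cast hlt
  have hn : (n : Cardinal) < ((m + 1 : ℕ) : Cardinal) :=
    lt_of_lt_of_le (by simpa using hrank) hle
  have : n < m + 1 := by exact_mod_cast hn
  omega

/-- If `H` is a complex Hilbert space with `dim H > k` (possibly infinite-dimensional) and
`k ≥ 1`, then `W_{𝒫_k}(A) = W(A)`: a complex number `λ` is an eigenvalue of the compression
`A_P` (i.e. `P(Af) = λ f` for some nonzero `f ∈ ran(P)`) for some orthogonal projection `P`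
with `k`-dimensional range if and only if `λ = ⟨Af, f⟩` for some unit vector `f ∈ H`. -/
theorem rankKFamilyNumericalRange_eq_numericalRange
    {H : Type*} [NormedAddCommGroup H] [InnerProductSpace ℂ H] [CompleteSpace H]
    (k : ℕ) (hk : 1 ≤ k) (hdim : (k : Cardinal) < Module.rank ℂ H)
    (A : H →L[ℂ] H) (lam : ℂ) :
    (∃ P : H →L[ℂ] H, P.comp P = P ∧ ContinuousLinearMap.adjoint P = P ∧
        Module.rank ℂ (LinearMap.range (P : H →ₗ[ℂ] H)) = k ∧
        ∃ f : H, f ∈ LinearMap.range (P : H →ₗ[ℂ] H) ∧ f ≠ 0 ∧ P (A f) = lam • f) ↔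
      ∃ f : H, ‖f‖ = 1 ∧ ⟪f, A f⟫_ℂ = lam := by
  constructor
  · rintro ⟨P, hP, hadj, -, f, ⟨g, rfl⟩, hf, hPA⟩
    simp only [ContinuousLinearMap.coe_coe] at hf hPA
    set f := P g
    have hPf : P f = f := congrArg (· g) hP
    have hinner : ⟪f, A f⟫_ℂ = lam * (‖f‖ : ℂ) ^ 2 := by
      calc ⟪f, A f⟫_ℂ = ⟪P f, A f⟫_ℂ := by rw [hPf]
        _ = ⟪f, P (A f)⟫_ℂ := by
          rw [← ContinuousLinearMap.adjoint_inner_right, hadj]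
        _ = lam * (‖f‖ : ℂ) ^ 2 := by
          rw [hPA, inner_smul_right, inner_self_eq_norm_sq_to_K]; rfl
    have hnorm : (‖f‖ : ℂ) ≠ 0 := by simpa using hf
    refine ⟨((‖f‖ : ℂ)⁻¹) • f, by simpa using norm_smul_inv_norm (𝕜 := ℂ) hf, ?_⟩
    rw [map_smul, inner_smul_left, inner_smul_right, hinner, map_inv₀, Complex.conj_ofReal]
    field_simp
  · rintro ⟨f, hf, hlam⟩
    have hf0 : f ≠ 0 := norm_ne_zero_iff.1 (by simp [hf])
    set g := A f - lam • f with hg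
    have hgf : ⟪g, f⟫_ℂ = 0 := by
      rw [← inner_conj_symm, hg, inner_sub_right, inner_smul_right, inner_self_eq_norm_sq_to_K, hf,
        hlam]
      simp
    obtain ⟨U, hUW, hfU, hU⟩ := Submodule.exists_le_mem_rank_eq
      (LinearMap.ker (innerₛₗ ℂ g)) (by simpa using hgf) hf0 hk
      (LinearMap.natCast_le_rank_ker_of_lt_rank _ hdim)
    have : FiniteDimensional ℂ U :=
      Module.rank_lt_aleph0_iff.1 (hU ▸ Cardinal.natCast_lt_aleph0)
    refine ⟨U.starProjection, U.isIdempotentElem_starProjection,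
      isSelfAdjoint_starProjection U, ?_, f, ?_, hf0, ?_⟩
    · rw [Submodule.range_starProjection, hU]
    · rwa [Submodule.range_starProjection]
    · refine (U.eq_starProjection_of_mem_of_inner_eq_zero (U.smul_mem lam hfU) fun w hw ↦ ?_)
      simpa using hUW hw
end

section
/- Let k ≥ 1, let H₁, …, H_k be complex Hilbert spaces, H = ⊕_{i=1}^k H_i their Hilbert-space direct sum, and 𝒜 a bounded linear operator on H with block entries A_{ij} : H_j → H_i (1 ≤ i, j ≤ k) bounded linear. Then W_{𝒫_{H₁,…,H_k}}(𝒜) = W_{H₁,…,H_k}(𝒜): a complex number λ is an eigenvalue of the compression 𝒜_P for some orthogonal projection P whose range is spanned by vectors F_i having nonzero i-th component f_i ∈ H_i and all other components zero (i = 1,…,k), if and only if λ is an eigenvalue of the k×k complex matrix with entries ⟨A_{ij} f_j, f_i⟩ for some unit vectors f_i ∈ H_i. -/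
open scoped InnerProductSpace

/-- The Hilbert-space direct sum `⊕_{i} H i` (with the `ℓ²` product inner product) of
complete spaces is complete. -/
instance piLp_completeSpace {k : ℕ} (H : Fin k → Type*) [∀ i, NormedAddCommGroup (H i)]
    [∀ i, CompleteSpace (H i)] : CompleteSpace (PiLp 2 H) :=
  PiLp.completeSpace 2 H

section BlockVectors

variable {k : ℕ} {H : Fin k → Type*} [∀ i, NormedAddCommGroup (H i)]
  [∀ i, InnerProductSpace ℂ (H i)]

/-- The span of the vectors with single nonzero block `f i` consists of the vectors whose blocks
are multiples of the `f i`. -/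
lemma mem_span_range_single_iff (f : ∀ i, H i) (x : PiLp 2 H) :
    x ∈ Submodule.span ℂ
        (Set.range fun i => (WithLp.equiv 2 (∀ i, H i)).symm (Pi.single i (f i))) ↔
      ∃ v : Fin k → ℂ, x = WithLp.toLp 2 fun i => v i • f i := by
  have hsum (v : Fin k → ℂ) :
      ∑ i, v i • (WithLp.equiv 2 (∀ i, H i)).symm (Pi.single i (f i)) =
        WithLp.toLp 2 fun i => v i • f i := by
    ext j
    simp only [WithLp.ofLp_sum, Finset.sum_apply, WithLp.equiv_symm_apply, PiLp.smul_apply]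
    rw [Finset.sum_eq_single j]
    · simp
    · intro i _ hij
      simp [Pi.single_eq_of_ne hij.symm]
    · simp
  rw [Submodule.mem_span_range_iff_exists_fun]
  simp only [hsum, eq_comm]

lemma inner_single_left (i : Fin k) (a : H i) (x : PiLp 2 H) :
    ⟪(WithLp.equiv 2 (∀ i, H i)).symm (Pi.single i a), x⟫_ℂ = ⟪a, x i⟫_ℂ := by
  rw [PiLp.inner_apply, Finset.sum_eq_single i]
  · simp
  · intro j _ hji
    simp [Pi.single_eq_of_ne hji]
  · simp

/-- Compressing a block operator to the span of the single-block vectors `f i` yields the matrix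
`(⟨A i j (f j), f i⟩)`. -/
lemma inner_single_blockOperator (𝒜 : PiLp 2 H →L[ℂ] PiLp 2 H) (A : ∀ i j, H j →L[ℂ] H i)
    (h𝒜 : ∀ (x : PiLp 2 H) (i : Fin k),
      (WithLp.equiv 2 (∀ i, H i)) (𝒜 x) i = ∑ j, A i j ((WithLp.equiv 2 (∀ i, H i)) x j))
    (f : ∀ i, H i) (v : Fin k → ℂ) (i : Fin k) :
    ⟪(WithLp.equiv 2 (∀ i, H i)).symm (Pi.single i (f i)),
        𝒜 (WithLp.toLp 2 fun j => v j • f j)⟫_ℂ =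
      (Matrix.of fun i j => ⟪f i, A i j (f j)⟫_ℂ).mulVec v i := by
  have h := h𝒜 (WithLp.toLp 2 fun j => v j • f j) i
  simp only [WithLp.equiv_apply] at h
  rw [inner_single_left, h, inner_sum]
  simp [Matrix.mulVec, dotProduct, inner_smul_right, mul_comm]

end BlockVectors

/-- `W_{𝒫_{H₁,…,H_k}}(𝒜) = W_{H₁,…,H_k}(𝒜)`: for a bounded block operator `𝒜` on
`H = ⊕_{i=1}^k H_i` with block entries `A i j : H j →L H i`, a complex number `λ` is an
eigenvalue of the compression `𝒜_P` for some orthogonal projection `P` whose range is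
spanned by vectors `F_i` having nonzero `i`-th component `f i ∈ H i` and all other
components zero, if and only if `λ` is an eigenvalue of the `k×k` matrix
`(⟨A_{ij} f_j, f_i⟩)_{i,j}` for some unit vectors `f i ∈ H i` (the block numerical
range of `𝒜`). -/
theorem projFamilyNumericalRange_eq_blockNumericalRange
    (k : ℕ) (hk : 1 ≤ k) (H : Fin k → Type*) [∀ i, NormedAddCommGroup (H i)]
    [∀ i, InnerProductSpace ℂ (H i)] [∀ i, CompleteSpace (H i)]
    (𝒜 : PiLp 2 H →L[ℂ] PiLp 2 H) (A : ∀ i j, H j →L[ℂ] H i)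
    (h𝒜 : ∀ (x : PiLp 2 H) (i : Fin k),
      (WithLp.equiv 2 (∀ i, H i)) (𝒜 x) i = ∑ j, A i j ((WithLp.equiv 2 (∀ i, H i)) x j))
    (lam : ℂ) :
    (∃ (f : ∀ i, H i) (P : PiLp 2 H →L[ℂ] PiLp 2 H), (∀ i, f i ≠ 0) ∧
        P.comp P = P ∧ ContinuousLinearMap.adjoint P = P ∧
        LinearMap.range (P : PiLp 2 H →ₗ[ℂ] PiLp 2 H) = Submodule.span ℂ
          (Set.range fun i => (WithLp.equiv 2 (∀ i, H i)).symm (Pi.single i (f i))) ∧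
        ∃ h : PiLp 2 H, h ∈ LinearMap.range (P : PiLp 2 H →ₗ[ℂ] PiLp 2 H) ∧ h ≠ 0 ∧ P (𝒜 h) = lam • h) ↔
    (∃ f : ∀ i, H i, (∀ i, ‖f i‖ = 1) ∧
        ∃ v : Fin k → ℂ, v ≠ 0 ∧
          (Matrix.of fun i j => ⟪f i, A i j (f j)⟫_ℂ).mulVec v = lam • v) := by
  constructor
  · rintro ⟨f, P, hf, hPP, hPadj, hrange, h, hh, hne, heig⟩
    rw [hrange, mem_span_range_single_iff] at hh
    obtain ⟨v, rfl⟩ := hh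
    have hnorm (i : Fin k) : (‖f i‖ : ℂ) ≠ 0 := by simpa using hf i
    set g : ∀ i, H i := fun i => (‖f i‖ : ℂ)⁻¹ • f i with hg
    have hgnorm (i : Fin k) : ‖g i‖ = 1 := by
      simpa [hg] using norm_smul_inv_norm (𝕜 := ℂ) (hf i)
    have hvec : (WithLp.toLp 2 fun i => v i • f i : PiLp 2 H) =
        WithLp.toLp 2 fun i => (v i * ‖f i‖) • g i := by
      ext i
      simp [hg, smul_smul, hnorm i]
    rw [hvec] at hne heig
    refine ⟨g, hgnorm, fun i => v i * ‖f i‖, fun h0 => hne ?_, ?_⟩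
    · ext i
      simp [congrFun h0 i]
    ext i
    have hfix : P ((WithLp.equiv 2 (∀ i, H i)).symm (Pi.single i (g i))) =
        (WithLp.equiv 2 (∀ i, H i)).symm (Pi.single i (g i)) := by
      have hmem : (WithLp.equiv 2 (∀ i, H i)).symm (Pi.single i (g i)) ∈
          LinearMap.range (P : PiLp 2 H →ₗ[ℂ] PiLp 2 H) := by
        rw [hrange, mem_span_range_single_iff]
        refine ⟨Pi.single i (‖f i‖ : ℂ)⁻¹, ?_⟩
        ext j
        by_cases hji : j = i
        · subst hji
          simp [hg]
        · simp [Pi.single_eq_of_ne hji]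
      obtain ⟨y, hy⟩ := hmem
      rw [← hy]
      exact DFunLike.congr_fun hPP y
    rw [← inner_single_blockOperator 𝒜 A h𝒜, ← hfix, ← ContinuousLinearMap.adjoint_inner_right,
      hPadj, heig, inner_smul_right, inner_single_left]
    simp [inner_self_eq_norm_sq_to_K, hgnorm]
  · rintro ⟨f, hf, v, hv, heig⟩
    set U := Submodule.span ℂ
      (Set.range fun i => (WithLp.equiv 2 (∀ i, H i)).symm (Pi.single i (f i))) with hU
    have : FiniteDimensional ℂ U := FiniteDimensional.span_of_finite ℂ (Set.finite_range _)
    have hf0 (i : Fin k) : f i ≠ 0 := norm_ne_zero_iff.mp (by simp [hf])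
    have hrange : LinearMap.range (U.starProjection : PiLp 2 H →ₗ[ℂ] PiLp 2 H) = U :=
      U.range_starProjection
    have hmem : (WithLp.toLp 2 fun i => v i • f i : PiLp 2 H) ∈ U :=
      (mem_span_range_single_iff f _).mpr ⟨v, rfl⟩
    refine ⟨f, U.starProjection, hf0, U.isIdempotentElem_starProjection,
      isSelfAdjoint_starProjection U, hrange, WithLp.toLp 2 fun i => v i • f i,
      hrange.symm ▸ hmem, fun h0 => hv ?_, ?_⟩
    · ext i
      have hi : v i • f i = 0 := congrArg (fun x : PiLp 2 H => x i) h0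
      exact (smul_eq_zero.mp hi).resolve_right (hf0 i)
    · refine (Submodule.eq_starProjection_of_mem_orthogonal (U.smul_mem lam hmem) ?_)
      rw [hU, Submodule.mem_orthogonal]
      intro u hu
      induction hu using Submodule.span_induction with
      | mem x hx =>
        obtain ⟨i, rfl⟩ := hx
        rw [inner_sub_right, inner_single_blockOperator 𝒜 A h𝒜, heig, inner_smul_right,
          inner_single_left]
        simp [inner_self_eq_norm_sq_to_K, hf]
      | zero => simp
      | add x y _ _ hx hy => rw [inner_add_left, hx, hy, add_zero]
      | smul a x _ hx => rw [inner_smul_left, hx, mul_zero]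
end
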